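/- Let 0 < λ₁ < λ₂ < λ₃, set m = (λ₂² − λ₁²)/(λ₃² − λ₁²), μ(m) = E(m)/K(m), and w² = λ₃² − (λ₃² − λ₁²)·μ(m). Then the second moment of the KdV wave field in the genus-1 soliton condensate satisfies (16/(3π))·∫₀^{λ₁} η⁴(w² − η²)/√((λ₁² − η²)(λ₂² − η²)(λ₃² − η²)) dη + (16/(3π))·∫_{λ₂}^{λ₃} η⁴(η² − w²)/√((η² − λ₁²)(η² − λ₂²)(λ₃² − η²)) dη = (2(λ₁² + λ₂² + λ₃²)/3)·(λ₁² + λ₂² − λ₃² + 2(λ₃² − λ₁²)·μ(m)) + (λ₁⁴ + λ₂⁴ + λ₃⁴ − 2λ₁²λ₂² − 2λ₂²λ₃² − 2λ₁²λ₃²)/3. -/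

import Mathlib

/-!
Write `a, b, c` for `l1², l2², l3²` and `P(x) = x²(x - w)`; the identity holds for every real `w`,
so nothing about the elliptic integrals is used.

The substitutions `η² = x = a sin²α` and `η² = t = b + (c - b) sin²β` remove the endpoint
singularities and turn the two band integrals into
`-∫ P(x) / √((b - x)(c - x)) dα` and `∫ P(t) / √(t (t - a)) dβ` over `[0, π/2]`
(`integral_lower_band`, `integral_upper_band`). By the classical integral
`∫₀^{π/2} dθ / (p cos²θ + q sin²θ) = π / (2√(pq))` (`integral_inv_cos_sq_add_sin_sq`), both
reciprocal square roots are Stieltjes transforms of an arcsine law: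
`1/√((b - x)(c - x)) = (2/π) ∫ dβ/(t - x)` and `1/√(t (t - a)) = (2/π) ∫ dα/(t - x)`.
Fubini then gives for the sum of the two integrals
`(2/π) ∬ (P(t) - P(x)) / (t - x) dα dβ`, whose integrand is the polynomial
`t² + t x + x² - w (t + x)`, so only `∫ sin²` and `∫ sin⁴` are left to evaluate.
This is a real-variable form of collapsing the contour around both cuts onto the residue
at infinity.
-/

open Real Set MeasureTheory

/-- The classical integral `∫₀^{π/2} dθ / (p cos²θ + q sin²θ) = π / (2√(pq))`. -/
lemma integral_inv_cos_sq_add_sin_sq {p q : ℝ} (hp : 0 < p) (hq : 0 < q) :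
    ∫ θ in (0:ℝ)..(π / 2), 1 / (p * cos θ ^ 2 + q * sin θ ^ 2) = π / 2 / √(p * q) := by
  obtain ⟨s, hs, rfl⟩ : ∃ s, 0 < s ∧ s ^ 2 = p := ⟨√p, sqrt_pos.2 hp, sq_sqrt hp.le⟩
  obtain ⟨r, hr, rfl⟩ : ∃ r, 0 < r ∧ r ^ 2 = q := ⟨√q, sqrt_pos.2 hq, sq_sqrt hq.le⟩
  have hD : ∀ {u v : ℝ}, 0 < u → 0 < v → ∀ θ, 0 < u * cos θ ^ 2 + v * sin θ ^ 2 := by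
    intro u v hu hv θ
    rcases eq_or_ne (sin θ) 0 with h | h
    · have := sin_sq_add_cos_sq θ
      rw [h] at this ⊢
      nlinarith
    · have : 0 < sin θ ^ 2 := by positivity
      positivity
  -- `arctan ((r/s) tan θ)` is singular at `π/2`; writing it as `θ` plus the arctangent that the
  -- subtraction formula gives for the difference makes it smooth on the whole line.
  have hder : ∀ θ ∈ uIcc (0:ℝ) (π / 2), HasDerivAt
      (fun θ => (θ + arctan ((r - s) * (sin θ * cos θ) /
        (s * cos θ ^ 2 + r * sin θ ^ 2))) / (s * r))
      (1 / (s ^ 2 * cos θ ^ 2 + r ^ 2 * sin θ ^ 2)) θ := by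
    intro θ _
    have h1 := hD hs hr θ
    have h2 := hD (pow_pos hs 2) (pow_pos hr 2) θ
    have hsin := hasDerivAt_sin θ
    have hcos := hasDerivAt_cos θ
    have hden := ((hcos.pow 2).const_mul s).add ((hsin.pow 2).const_mul r)
    have hquot := ((hsin.mul hcos).const_mul (r - s)).div hden h1.ne'
    have := ((hasDerivAt_id θ).add hquot.arctan).div_const (s * r)
    refine this.congr_deriv ?_
    have h3 := sin_sq_add_cos_sq θ
    simp only [Pi.add_apply, Pi.mul_apply, Pi.pow_apply, Pi.div_apply, Nat.cast_ofNat]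
    generalize sin θ = S at *
    generalize cos θ = C at *
    have key : 1 + ((r - s) * (S * C) / (s * C ^ 2 + r * S ^ 2)) ^ 2 =
        (s ^ 2 * C ^ 2 + r ^ 2 * S ^ 2) / (s * C ^ 2 + r * S ^ 2) ^ 2 := by
      field_simp
      linear_combination (s ^ 2 * C ^ 2 + r ^ 2 * S ^ 2) * h3
    rw [key]
    field_simp
    norm_num only [pow_one]
    linear_combination ((r - s) * (s * C ^ 2 - r * S ^ 2) + s * r) * h3
  rw [intervalIntegral.integral_eq_sub_of_hasDerivAt hder]
  · have : √(s ^ 2 * r ^ 2) = s * r := by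
      rw [← mul_pow]; exact sqrt_sq (by positivity)
    simp [this]
  · refine (Continuous.div (by fun_prop) (by fun_prop) fun θ => ?_).intervalIntegrable _ _
    exact (hD (pow_pos hs 2) (pow_pos hr 2) θ).ne'

/-- Substitution along a map that is monotone on `[0, π/2]`; the integrand `g` may be singular at
the endpoints, and the substituted integrand only has to match on the open interval. -/
lemma integral_subst_quarter {f f' g h : ℝ → ℝ} (hf : Continuous f)
    (hd : ∀ x ∈ Ioo (0:ℝ) (π / 2), HasDerivAt f (f' x) x)
    (h0 : ∀ x ∈ Ioo (0:ℝ) (π / 2), 0 ≤ f' x) (hle : f 0 ≤ f (π / 2))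
    (hg : ∀ x ∈ Ioo (0:ℝ) (π / 2), f' x * g (f x) = h x) :
    ∫ u in f 0..f (π / 2), g u = ∫ x in (0:ℝ)..(π / 2), h x := by
  have hpi : (0:ℝ) ≤ π / 2 := by positivity
  rw [intervalIntegral.integral_of_le hle, intervalIntegral.integral_of_le hpi,
    ← integral_Icc_eq_integral_Ioc, integral_Ioc_eq_integral_Ioo,
    ← integral_Icc_deriv_smul_of_deriv_nonneg hf.continuousOn hd h0 hpi,
    integral_Icc_eq_integral_Ioo]
  exact setIntegral_congr_fun measurableSet_Ioo hg

lemma integral_lower_band {l1 : ℝ} (l2 l3 w : ℝ) (h1 : 0 < l1) :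
    ∫ η in (0:ℝ)..l1, η ^ 4 * (w - η ^ 2) /
        √((l1 ^ 2 - η ^ 2) * (l2 ^ 2 - η ^ 2) * (l3 ^ 2 - η ^ 2)) =
      ∫ α in (0:ℝ)..(π / 2), (l1 ^ 2 * sin α ^ 2) ^ 2 * (w - l1 ^ 2 * sin α ^ 2) /
        √((l2 ^ 2 - l1 ^ 2 * sin α ^ 2) * (l3 ^ 2 - l1 ^ 2 * sin α ^ 2)) := by
  have := integral_subst_quarter (f := fun α => l1 * sin α) (f' := fun α => l1 * cos α)
    (g := fun η => η ^ 4 * (w - η ^ 2) /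
        √((l1 ^ 2 - η ^ 2) * (l2 ^ 2 - η ^ 2) * (l3 ^ 2 - η ^ 2)))
    (h := fun α => (l1 ^ 2 * sin α ^ 2) ^ 2 * (w - l1 ^ 2 * sin α ^ 2) /
        √((l2 ^ 2 - l1 ^ 2 * sin α ^ 2) * (l3 ^ 2 - l1 ^ 2 * sin α ^ 2)))
    (by fun_prop) (fun x _ => (hasDerivAt_sin x).const_mul l1) ?_ (by simp [h1.le]) ?_
  · simpa using this
  · intro x hx
    have := cos_pos_of_mem_Ioo ⟨by linarith [hx.1, pi_pos], hx.2⟩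
    positivity
  · intro x hx
    have hc := cos_pos_of_mem_Ioo ⟨by linarith [hx.1, pi_pos], hx.2⟩
    have e1 : l1 ^ 2 - (l1 * sin x) ^ 2 = (l1 * cos x) ^ 2 := by
      linear_combination (-l1 ^ 2) * sin_sq_add_cos_sq x
    have e2 : (l1 ^ 2 - (l1 * sin x) ^ 2) * (l2 ^ 2 - (l1 * sin x) ^ 2) *
        (l3 ^ 2 - (l1 * sin x) ^ 2) = (l1 * cos x) ^ 2 *
        ((l2 ^ 2 - l1 ^ 2 * sin x ^ 2) * (l3 ^ 2 - l1 ^ 2 * sin x ^ 2)) := by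
      rw [e1]; ring
    have hpos : 0 < l1 * cos x := by positivity
    rw [e2, sqrt_mul (sq_nonneg _), sqrt_sq hpos.le, ← mul_div_assoc,
      mul_div_mul_left _ _ hpos.ne']
    ring

lemma integral_upper_band {l1 l2 l3 : ℝ} (w : ℝ) (h1 : 0 < l1) (h12 : l1 < l2) (h23 : l2 < l3) :
    ∫ η in l2..l3, η ^ 4 * (η ^ 2 - w) /
        √((η ^ 2 - l1 ^ 2) * (η ^ 2 - l2 ^ 2) * (l3 ^ 2 - η ^ 2)) =
      ∫ β in (0:ℝ)..(π / 2), (l2 ^ 2 + (l3 ^ 2 - l2 ^ 2) * sin β ^ 2) ^ 2 *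
        ((l2 ^ 2 + (l3 ^ 2 - l2 ^ 2) * sin β ^ 2) - w) /
        √((l2 ^ 2 + (l3 ^ 2 - l2 ^ 2) * sin β ^ 2) *
          ((l2 ^ 2 + (l3 ^ 2 - l2 ^ 2) * sin β ^ 2) - l1 ^ 2)) := by
  have h2 : 0 < l2 := h1.trans h12
  have h3 : 0 < l3 := h2.trans h23
  have hcb : 0 < l3 ^ 2 - l2 ^ 2 := by nlinarith
  have hba : 0 < l2 ^ 2 - l1 ^ 2 := by nlinarith
  have ht : ∀ β, 0 < l2 ^ 2 + (l3 ^ 2 - l2 ^ 2) * sin β ^ 2 := fun β => by positivity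
  have := integral_subst_quarter (f := fun β => √(l2 ^ 2 + (l3 ^ 2 - l2 ^ 2) * sin β ^ 2))
    (f' := fun β => (l3 ^ 2 - l2 ^ 2) * (sin β * cos β) /
      √(l2 ^ 2 + (l3 ^ 2 - l2 ^ 2) * sin β ^ 2))
    (g := fun η => η ^ 4 * (η ^ 2 - w) /
        √((η ^ 2 - l1 ^ 2) * (η ^ 2 - l2 ^ 2) * (l3 ^ 2 - η ^ 2)))
    (h := fun β => (l2 ^ 2 + (l3 ^ 2 - l2 ^ 2) * sin β ^ 2) ^ 2 *
        ((l2 ^ 2 + (l3 ^ 2 - l2 ^ 2) * sin β ^ 2) - w) /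
        √((l2 ^ 2 + (l3 ^ 2 - l2 ^ 2) * sin β ^ 2) *
          ((l2 ^ 2 + (l3 ^ 2 - l2 ^ 2) * sin β ^ 2) - l1 ^ 2)))
    (by fun_prop) ?_ ?_ ?_ ?_
  · simpa [sqrt_sq h2.le, sqrt_sq h3.le] using this
  · intro x _
    have := ((((hasDerivAt_sin x).pow 2).const_mul (l3 ^ 2 - l2 ^ 2)).const_add
      (l2 ^ 2)).sqrt (ht x).ne'
    refine this.congr_deriv ?_
    simp only [Pi.pow_apply]
    field_simp
    push_cast
    ring
  · intro x hx
    have := cos_pos_of_mem_Ioo ⟨by linarith [hx.1, pi_pos], hx.2⟩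
    have := sin_pos_of_pos_of_lt_pi hx.1 (by linarith [hx.2, pi_pos])
    positivity
  · exact sqrt_le_sqrt (by simp; nlinarith)
  · intro x hx
    have hc := cos_pos_of_mem_Ioo ⟨by linarith [hx.1, pi_pos], hx.2⟩
    have hs := sin_pos_of_pos_of_lt_pi hx.1 (by linarith [hx.2, pi_pos])
    have htx := ht x
    have e0 : l3 ^ 2 - (l2 ^ 2 + (l3 ^ 2 - l2 ^ 2) * sin x ^ 2) =
        (l3 ^ 2 - l2 ^ 2) * cos x ^ 2 := by
      linear_combination (-(l3 ^ 2 - l2 ^ 2)) * sin_sq_add_cos_sq x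
    have hta : 0 < l2 ^ 2 + (l3 ^ 2 - l2 ^ 2) * sin x ^ 2 - l1 ^ 2 := by
      nlinarith [sq_nonneg (sin x), mul_nonneg hcb.le (sq_nonneg (sin x))]
    have e1 : l2 ^ 2 + (l3 ^ 2 - l2 ^ 2) * sin x ^ 2 - l2 ^ 2 =
        (l3 ^ 2 - l2 ^ 2) * sin x ^ 2 := by ring
    have e4 : √(l2 ^ 2 + (l3 ^ 2 - l2 ^ 2) * sin x ^ 2) ^ 4 =
        (l2 ^ 2 + (l3 ^ 2 - l2 ^ 2) * sin x ^ 2) ^ 2 := by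
      rw [show (4:ℕ) = 2 * 2 from rfl, pow_mul, sq_sqrt htx.le]
    rw [e4, sq_sqrt htx.le, e0, e1]
    generalize l2 ^ 2 + (l3 ^ 2 - l2 ^ 2) * sin x ^ 2 = t at *
    have e2 : (t - l1 ^ 2) * ((l3 ^ 2 - l2 ^ 2) * sin x ^ 2) *
        ((l3 ^ 2 - l2 ^ 2) * cos x ^ 2) =
        ((l3 ^ 2 - l2 ^ 2) * (sin x * cos x)) ^ 2 * (t - l1 ^ 2) := by ring
    have hpos : 0 < (l3 ^ 2 - l2 ^ 2) * (sin x * cos x) := by positivity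
    rw [e2, sqrt_mul (sq_nonneg _), sqrt_sq hpos.le, sqrt_mul htx.le]
    generalize (l3 ^ 2 - l2 ^ 2) * (sin x * cos x) = d at *
    have := sqrt_pos.2 htx
    have := sqrt_pos.2 hta
    field_simp

lemma integral_sin_sq_quarter : ∫ x in (0:ℝ)..(π / 2), sin x ^ 2 = π / 4 := by
  rw [integral_sin_sq]; simp; ring

lemma integral_sin_four_quarter : ∫ x in (0:ℝ)..(π / 2), sin x ^ 4 = 3 * π / 16 := by
  rw [integral_sin_pow 2, integral_sin_sq_quarter]; simp; ring

lemma integral_sin_even_quarter (A B C : ℝ) :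
    ∫ x in (0:ℝ)..(π / 2), (A + B * sin x ^ 2 + C * sin x ^ 4) =
      π / 2 * (A + B / 2 + 3 / 8 * C) := by
  have hi : ∀ f : ℝ → ℝ, Continuous f → IntervalIntegrable f volume 0 (π / 2) :=
    fun f hf => hf.intervalIntegrable _ _
  rw [intervalIntegral.integral_add (hi _ (by fun_prop)) (hi _ (by fun_prop)),
    intervalIntegral.integral_add (hi _ (by fun_prop)) (hi _ (by fun_prop)),
    intervalIntegral.integral_const_mul, intervalIntegral.integral_const_mul,
    intervalIntegral.integral_const, integral_sin_sq_quarter, integral_sin_four_quarter,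
    smul_eq_mul]
  ring

/-- The two band integrals after substitution, combined by Fubini: the Cauchy kernel
`1 / (t - x)` cancels and the answer is a polynomial in `a, b, c, w`. -/
lemma band_sum {a b c : ℝ} (w : ℝ) (ha : 0 < a) (hab : a < b) (hbc : b < c) :
    (∫ α in (0:ℝ)..(π / 2), (a * sin α ^ 2) ^ 2 * (w - a * sin α ^ 2) /
        √((b - a * sin α ^ 2) * (c - a * sin α ^ 2))) +
      (∫ β in (0:ℝ)..(π / 2), (b + (c - b) * sin β ^ 2) ^ 2 * ((b + (c - b) * sin β ^ 2) - w) /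
        √((b + (c - b) * sin β ^ 2) * ((b + (c - b) * sin β ^ 2) - a))) =
      π / 2 * (3 / 8 * (a ^ 2 + b ^ 2 + c ^ 2) + 1 / 4 * (a * b + b * c + a * c) -
        w * (a + b + c) / 2) := by
  have hpi := pi_pos
  have hx0 : ∀ α, 0 ≤ a * sin α ^ 2 := fun α => by positivity
  have hxa : ∀ α, a * sin α ^ 2 ≤ a := fun α => by nlinarith [sin_sq_le_one α]
  have htb : ∀ β, b ≤ b + (c - b) * sin β ^ 2 := fun β => by
    nlinarith [mul_nonneg (sub_pos.2 hbc).le (sq_nonneg (sin β))]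
  have hne : ∀ α β, b + (c - b) * sin β ^ 2 - a * sin α ^ 2 ≠ 0 := fun α β => by
    have := hxa α; have := htb β
    intro h; linarith
  have hS1 : ∀ α, 1 / √((b - a * sin α ^ 2) * (c - a * sin α ^ 2)) =
      2 / π * ∫ β in (0:ℝ)..(π / 2), 1 / (b + (c - b) * sin β ^ 2 - a * sin α ^ 2) := by
    intro α
    have h := integral_inv_cos_sq_add_sin_sq (p := b - a * sin α ^ 2) (q := c - a * sin α ^ 2)
      (by linarith [hxa α]) (by linarith [hxa α])
    have e : ∀ β, (b - a * sin α ^ 2) * cos β ^ 2 + (c - a * sin α ^ 2) * sin β ^ 2 =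
        b + (c - b) * sin β ^ 2 - a * sin α ^ 2 := fun β => by
      linear_combination (b - a * sin α ^ 2) * sin_sq_add_cos_sq β
    simp only [e] at h
    rw [h]
    field_simp
  have hS2 : ∀ β, 1 / √((b + (c - b) * sin β ^ 2) * (b + (c - b) * sin β ^ 2 - a)) =
      2 / π * ∫ α in (0:ℝ)..(π / 2), 1 / (b + (c - b) * sin β ^ 2 - a * sin α ^ 2) := by
    intro β
    have h := integral_inv_cos_sq_add_sin_sq (p := b + (c - b) * sin β ^ 2)
      (q := b + (c - b) * sin β ^ 2 - a) (by linarith [htb β]) (by linarith [htb β])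
    have e : ∀ α, (b + (c - b) * sin β ^ 2) * cos α ^ 2 +
        (b + (c - b) * sin β ^ 2 - a) * sin α ^ 2 =
        b + (c - b) * sin β ^ 2 - a * sin α ^ 2 := fun α => by
      linear_combination (b + (c - b) * sin β ^ 2) * sin_sq_add_cos_sq α
    simp only [e] at h
    rw [h]
    field_simp
  have hI1 : ∀ α, (a * sin α ^ 2) ^ 2 * (w - a * sin α ^ 2) /
        √((b - a * sin α ^ 2) * (c - a * sin α ^ 2)) =
      2 / π * ∫ β in (0:ℝ)..(π / 2), (a * sin α ^ 2) ^ 2 * (w - a * sin α ^ 2) /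
        (b + (c - b) * sin β ^ 2 - a * sin α ^ 2) := by
    intro α
    rw [div_eq_mul_one_div, hS1, mul_left_comm, ← intervalIntegral.integral_const_mul]
    simp only [mul_one_div]
  have hI2 : ∀ β, (b + (c - b) * sin β ^ 2) ^ 2 * ((b + (c - b) * sin β ^ 2) - w) /
        √((b + (c - b) * sin β ^ 2) * ((b + (c - b) * sin β ^ 2) - a)) =
      2 / π * ∫ α in (0:ℝ)..(π / 2), (b + (c - b) * sin β ^ 2) ^ 2 *
        ((b + (c - b) * sin β ^ 2) - w) / (b + (c - b) * sin β ^ 2 - a * sin α ^ 2) := by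
    intro β
    rw [div_eq_mul_one_div, hS2, mul_left_comm, ← intervalIntegral.integral_const_mul]
    simp only [mul_one_div]
  simp only [hI1, hI2, intervalIntegral.integral_const_mul]
  have hc1 : Continuous fun z : ℝ × ℝ => (a * sin z.1 ^ 2) ^ 2 * (w - a * sin z.1 ^ 2) /
        (b + (c - b) * sin z.2 ^ 2 - a * sin z.1 ^ 2) :=
    Continuous.div (by fun_prop) (by fun_prop) fun z => hne _ _
  rw [intervalIntegral_intervalIntegral_swap
    (F := fun α β => (a * sin α ^ 2) ^ 2 * (w - a * sin α ^ 2) /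
        (b + (c - b) * sin β ^ 2 - a * sin α ^ 2))
    ((hc1.continuousOn.integrableOn_compact (isCompact_uIcc.prod isCompact_uIcc)).mono_set
      (prod_mono uIoc_subset_uIcc uIoc_subset_uIcc)), ← mul_add,
    ← intervalIntegral.integral_add]
  rotate_left
  · refine Continuous.intervalIntegrable ?_ _ _
    refine intervalIntegral.continuous_parametric_intervalIntegral_of_continuous'
      (f := fun β α => (a * sin α ^ 2) ^ 2 * (w - a * sin α ^ 2) /
        (b + (c - b) * sin β ^ 2 - a * sin α ^ 2)) ?_ _ _
    exact Continuous.div (by fun_prop) (by fun_prop) fun z => hne _ _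
  · refine Continuous.intervalIntegrable ?_ _ _
    refine intervalIntegral.continuous_parametric_intervalIntegral_of_continuous'
      (f := fun β α => (b + (c - b) * sin β ^ 2) ^ 2 *
        ((b + (c - b) * sin β ^ 2) - w) / (b + (c - b) * sin β ^ 2 - a * sin α ^ 2)) ?_ _ _
    exact Continuous.div (by fun_prop) (by fun_prop) fun z => hne _ _
  -- the inner integral is that of the difference quotient of `x²(x - w)`
  have hin : ∀ β, (∫ α in (0:ℝ)..(π / 2), (a * sin α ^ 2) ^ 2 * (w - a * sin α ^ 2) /
        (b + (c - b) * sin β ^ 2 - a * sin α ^ 2)) +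
      (∫ α in (0:ℝ)..(π / 2), (b + (c - b) * sin β ^ 2) ^ 2 *
        ((b + (c - b) * sin β ^ 2) - w) / (b + (c - b) * sin β ^ 2 - a * sin α ^ 2)) =
      π / 2 * ((b ^ 2 + a * b / 2 + 3 / 8 * a ^ 2 - w * (b + a / 2)) +
        (c - b) * (2 * b + a / 2 - w) * sin β ^ 2 + (c - b) ^ 2 * sin β ^ 4) := by
    intro β
    rw [← intervalIntegral.integral_add]
    rotate_left
    · exact (Continuous.div (by fun_prop) (by fun_prop) fun α => hne α β).intervalIntegrable _ _
    · exact (Continuous.div (by fun_prop) (by fun_prop) fun α => hne α β).intervalIntegrable _ _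
    set t := b + (c - b) * sin β ^ 2 with ht
    have e : ∀ α, (a * sin α ^ 2) ^ 2 * (w - a * sin α ^ 2) / (t - a * sin α ^ 2) +
        t ^ 2 * (t - w) / (t - a * sin α ^ 2) =
        (t ^ 2 - w * t) + ((t - w) * a) * sin α ^ 2 + a ^ 2 * sin α ^ 4 := by
      intro α
      have := hne α β
      rw [← ht] at this
      field_simp
      ring
    simp only [e]
    rw [integral_sin_even_quarter, ht]
    ring
  simp only [hin]
  rw [intervalIntegral.integral_const_mul, integral_sin_even_quarter]
  field_simp
  ring


/-- The complete elliptic integral of the first kind, `K(m) = ∫₀^{π/2} dθ/√(1 - m sin²θ)`. -/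
noncomputable def ellipticK (m : ℝ) : ℝ :=
  ∫ θ in (0:ℝ)..(Real.pi / 2), 1 / Real.sqrt (1 - m * Real.sin θ ^ 2)

/-- The complete elliptic integral of the second kind, `E(m) = ∫₀^{π/2} √(1 - m sin²θ) dθ`. -/
noncomputable def ellipticE (m : ℝ) : ℝ :=
  ∫ θ in (0:ℝ)..(Real.pi / 2), Real.sqrt (1 - m * Real.sin θ ^ 2)

/-- The second moment of the KdV wave field in the genus-1 soliton condensate:
with `m = (λ₂²-λ₁²)/(λ₃²-λ₁²)`, `μ(m) = E(m)/K(m)` and `w² = λ₃² - (λ₃²-λ₁²)μ(m)`,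
`⟨φ²⟩ = (16/3)∫_{Γ⁺} η³ u(η) dη
      = (2(λ₁²+λ₂²+λ₃²)/3)⟨φ⟩ + (λ₁⁴+λ₂⁴+λ₃⁴-2λ₁²λ₂²-2λ₂²λ₃²-2λ₁²λ₃²)/3`. -/
theorem genus1_condensate_second_moment (l1 l2 l3 : ℝ)
    (h1 : 0 < l1) (h12 : l1 < l2) (h23 : l2 < l3) :
    (16 / (3 * Real.pi)) *
        (∫ η in (0:ℝ)..l1,
          η ^ 4 * ((l3 ^ 2 - (l3 ^ 2 - l1 ^ 2) *
              (ellipticE ((l2 ^ 2 - l1 ^ 2) / (l3 ^ 2 - l1 ^ 2)) /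
                ellipticK ((l2 ^ 2 - l1 ^ 2) / (l3 ^ 2 - l1 ^ 2)))) - η ^ 2) /
            Real.sqrt ((l1 ^ 2 - η ^ 2) * (l2 ^ 2 - η ^ 2) * (l3 ^ 2 - η ^ 2))) +
      (16 / (3 * Real.pi)) *
        (∫ η in l2..l3,
          η ^ 4 * (η ^ 2 - (l3 ^ 2 - (l3 ^ 2 - l1 ^ 2) *
              (ellipticE ((l2 ^ 2 - l1 ^ 2) / (l3 ^ 2 - l1 ^ 2)) /
                ellipticK ((l2 ^ 2 - l1 ^ 2) / (l3 ^ 2 - l1 ^ 2))))) /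
            Real.sqrt ((η ^ 2 - l1 ^ 2) * (η ^ 2 - l2 ^ 2) * (l3 ^ 2 - η ^ 2))) =
      (2 * (l1 ^ 2 + l2 ^ 2 + l3 ^ 2) / 3) *
        (l1 ^ 2 + l2 ^ 2 - l3 ^ 2 + 2 * (l3 ^ 2 - l1 ^ 2) *
          (ellipticE ((l2 ^ 2 - l1 ^ 2) / (l3 ^ 2 - l1 ^ 2)) /
            ellipticK ((l2 ^ 2 - l1 ^ 2) / (l3 ^ 2 - l1 ^ 2)))) +
      (l1 ^ 4 + l2 ^ 4 + l3 ^ 4 - 2 * l1 ^ 2 * l2 ^ 2 - 2 * l2 ^ 2 * l3 ^ 2 -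
        2 * l1 ^ 2 * l3 ^ 2) / 3 := by
  generalize ellipticE ((l2 ^ 2 - l1 ^ 2) / (l3 ^ 2 - l1 ^ 2)) /
    ellipticK ((l2 ^ 2 - l1 ^ 2) / (l3 ^ 2 - l1 ^ 2)) = μ
  have hsum := band_sum (a := l1 ^ 2) (b := l2 ^ 2) (c := l3 ^ 2)
    (l3 ^ 2 - (l3 ^ 2 - l1 ^ 2) * μ) (by positivity) (by nlinarith) (by nlinarith)
  rw [← mul_add, integral_lower_band _ _ _ h1, integral_upper_band _ h1 h12 h23, hsum]
  have := pi_ne_zero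
  field_simp
  ring
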